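/- (i) For every prime power q and all integers n ≥ m ≥ 1, one has x_q ≤ x. (ii) Fix a prime power q and ε ∈ (0,1/2). There exist constants c, C > 0 (depending only on q and ε) and an integer N such that for all integers n ≥ N and all integers m with (3/4)·(log n)/(log q) ≤ m ≤ (2−ε)·(log n)/(log q), one has c·(min{n, q^m})² / (q^{m}·n·m) ≤ x − x_q ≤ C·min{n, q^m} / ( q^{m}·m·(1 − x_q/q) ). -/

import Mathlib

open Real

noncomputable section

/-- Predicate characterizing the Dickman function `ρ : [0,∞) → (0,∞)`:
continuous on `[0,∞)`, positive, equal to `1` on `[0,1]`, and satisfying the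
delay differential equation `t·ρ'(t) + ρ(t-1) = 0` for `t > 1`. -/
def IsDickman (ρ : ℝ → ℝ) : Prop :=
  ContinuousOn ρ (Set.Ici 0) ∧
  (∀ t : ℝ, 0 ≤ t → 0 < ρ t) ∧
  (∀ t ∈ Set.Icc (0:ℝ) 1, ρ t = 1) ∧
  (∀ t : ℝ, 1 < t → HasDerivAt ρ (-(ρ (t - 1)) / t) t)

/-- `ξ(u)`: for `u > 1`, the unique positive solution of `e^ξ = 1 + u·ξ`; otherwise `0`. -/
def xi (u : ℝ) : ℝ :=
  open Classical in
  if h : ∃ x : ℝ, 0 < x ∧ Real.exp x = 1 + u * x then h.choose else 0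

/-- `p_{n,m}`: probability that a uniformly random permutation of `{1,…,n}` is `m`-friable,
i.e. has no cycle of length greater than `m`. -/
def permProb (n m : ℕ) : ℝ :=
  (Nat.card {σ : Equiv.Perm (Fin n) // ∀ c ∈ σ.cycleType, c ≤ m} : ℝ) /
    (Nat.factorial n : ℝ)

/-- `p_{n,m,q}`: proportion of monic polynomials of degree `n` over a finite field `F`
(of cardinality `q`) that are `m`-friable, i.e. all of whose monic irreducible factors
have degree at most `m`. -/
def polyProb (F : Type) [Field F] [Fintype F] (n m : ℕ) : ℝ :=
  (Nat.card {f : Polynomial F // f.Monic ∧ f.natDegree = n ∧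
      ∀ p : Polynomial F, p.Monic → Irreducible p → p ∣ f → p.natDegree ≤ m} : ℝ) /
    (Fintype.card F : ℝ) ^ n

/-- `F_q(z) = ∏_{deg P ≤ m} (1 - (z/q)^{deg P})⁻¹`, the product over monic irreducible
polynomials `P` over `F` of degree at most `m`. -/
def FqFun (F : Type) [Field F] [Fintype F] (m : ℕ) (z : ℝ) : ℝ :=
  ∏ᶠ p ∈ {p : Polynomial F | p.Monic ∧ Irreducible p ∧ p.natDegree ≤ m},
    (1 - (z / (Fintype.card F : ℝ)) ^ p.natDegree)⁻¹

/-- `G_q(z) = F_q(z) · exp(-∑_{i=1}^m z^i/i)`. -/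
def Gq (F : Type) [Field F] [Fintype F] (m : ℕ) (z : ℝ) : ℝ :=
  FqFun F m z * Real.exp (-(∑ i ∈ Finset.Icc 1 m, z ^ i / (i : ℝ)))

/-- The coefficients `d_{m,i}`. -/
def dcoef (m i : ℕ) : ℝ :=
  if i = m then -(1 / (m : ℝ)) * ∑ j ∈ Finset.Icc 2 m, (1 : ℝ) / (j : ℝ)
  else Real.Gamma ((i : ℝ) + (i : ℝ) / (m : ℝ)) /
    (((m : ℝ) - (i : ℝ)) * (Nat.factorial i : ℝ) * Real.Gamma (1 + (i : ℝ) / (m : ℝ)))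

/-- `T(s) = ∫₀^s ((e^t - 1)/t)·((t/m)/(1 - e^{-t/m}) - 1) dt`, integrand extended by `0` at `t = 0`. -/
def Tfun (m : ℕ) (s : ℝ) : ℝ :=
  ∫ t in (0:ℝ)..s,
    if t = 0 then 0 else
      ((Real.exp t - 1) / t) * ((t / (m : ℝ)) / (1 - Real.exp (-t / (m : ℝ))) - 1)

end

open Polynomial in
lemma irr_finite (F : Type) [Field F] [Fintype F] (m : ℕ) :
    {p : Polynomial F | p.Monic ∧ Irreducible p ∧ p.natDegree ≤ m}.Finite := by
  have h : Finite (degreeLT F (m + 1)) := Finite.of_equiv _ (degreeLTEquiv F (m + 1)).symm.toEquiv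
  have h2 : ((degreeLT F (m + 1) : Submodule F F[X]) : Set F[X]).Finite := h
  refine h2.subset ?_
  rintro p ⟨hp, _, hd⟩
  rw [SetLike.mem_coe, mem_degreeLT]
  exact lt_of_le_of_lt degree_le_natDegree (by exact_mod_cast Nat.lt_succ_of_le hd)

noncomputable def irrSet (F : Type) [Field F] [Fintype F] (m : ℕ) : Finset (Polynomial F) :=
  (irr_finite F m).toFinset

lemma mem_irrSet (F : Type) [Field F] [Fintype F] (m : ℕ) (p : Polynomial F) :
    p ∈ irrSet F m ↔ p.Monic ∧ Irreducible p ∧ p.natDegree ≤ m := by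
  simp [irrSet]

noncomputable def irrCnt (F : Type) [Field F] [Fintype F] (d : ℕ) : ℕ :=
  ((irrSet F d).filter (fun p => p.natDegree = d)).card

lemma irr_fiber (F : Type) [Field F] [Fintype F] (m d : ℕ) (h : d ≤ m) :
    ((irrSet F m).filter (fun p => p.natDegree = d)).card = irrCnt F d := by
  unfold irrCnt
  congr 1
  ext p
  simp only [Finset.mem_filter, mem_irrSet]
  constructor
  · rintro ⟨⟨a, b, c⟩, e⟩; exact ⟨⟨a, b, e.le⟩, e⟩
  · rintro ⟨⟨a, b, c⟩, e⟩; exact ⟨⟨a, b, c.trans h⟩, e⟩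

lemma irr_sum (F : Type) [Field F] [Fintype F] (m : ℕ) (f : ℕ → ℝ) :
    ∑ p ∈ irrSet F m, f p.natDegree = ∑ d ∈ Finset.Icc 1 m, (irrCnt F d : ℝ) * f d := by
  have hm : ∀ p ∈ irrSet F m, p.natDegree ∈ Finset.Icc 1 m := by
    intro p hp
    rw [mem_irrSet] at hp
    exact Finset.mem_Icc.2 ⟨hp.2.1.natDegree_pos, hp.2.2⟩
  rw [← Finset.sum_fiberwise_of_maps_to hm]
  refine Finset.sum_congr rfl fun d hd => ?_
  rw [← irr_fiber F m d (Finset.mem_Icc.1 hd).2, Finset.sum_congr rfl (g := fun _ => f d)]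
  · simp
  · intro p hp
    rw [(Finset.mem_filter.1 hp).2]

open Polynomial in
lemma gauss_aux (F : Type) [Field F] [Fintype F] (n : ℕ) (hn : n ≠ 0)
    (L : Type) [Field L] [Finite L] [Algebra F L]
    (hcard : Nat.card L = Nat.card F ^ n) (hfr : Module.finrank F L = n)
    (hsf : IsSplittingField F L (X ^ Nat.card F ^ n - X)) :
    ∑ d ∈ n.divisors, d * irrCnt F d = Fintype.card F ^ n := by
  classical
  have := Fintype.ofFinite L
  have hfd : Module.Finite F L := Module.Finite.of_finite
  rw [← Nat.card_eq_fintype_card, ← hcard, Nat.card_eq_fintype_card, ← Finset.card_univ]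
  have hdeg : ∀ x : L, (minpoly F x).natDegree ∈ n.divisors := by
    intro x
    rw [Nat.mem_divisors]
    exact ⟨hfr ▸ minpoly.degree_dvd (Algebra.IsIntegral.isIntegral x), hn⟩
  rw [Finset.card_eq_sum_card_fiberwise (s := Finset.univ) (t := n.divisors)
    (f := fun x : L => (minpoly F x).natDegree) (fun x _ => hdeg x)]
  refine Finset.sum_congr rfl fun d hd => ?_
  have hdn := (Nat.mem_divisors.1 hd).1
  rw [Finset.card_eq_sum_card_fiberwise (f := fun x : L => minpoly F x)
    (t := (irrSet F d).filter (fun p => p.natDegree = d))]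
  · rw [irrCnt, mul_comm, ← smul_eq_mul, ← Finset.sum_const]
    refine Finset.sum_congr rfl fun f hf => ?_
    rw [Finset.mem_filter, mem_irrSet] at hf
    obtain ⟨⟨hmon, hirr, _⟩, hfd⟩ := hf
    have hsep : f.Separable := PerfectField.separable_of_irreducible hirr
    have hdvd : f ∣ X ^ (Nat.card F) ^ n - X :=
      hirr.natDegree_dvd_iff_dvd_X_pow_card_pow_sub_X.1 (hfd ▸ hdn)
    have hsplit : (f.map (algebraMap F L)).Splits := by
      refine Splits.of_dvd hsf.splits ?_ (map_dvd (algebraMap F L) hdvd)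
      exact map_ne_zero (FiniteField.X_pow_card_pow_sub_X_ne_zero _ hn Finite.one_lt_card)
    have h1 := card_rootSet_eq_natDegree hsep hsplit
    rw [← hfd, ← h1, ← Set.toFinset_card]
    congr 1
    ext x
    simp only [Set.mem_toFinset, Finset.mem_filter, Finset.mem_univ, true_and]
    rw [mem_rootSet_of_ne hmon.ne_zero]
    constructor
    · intro hx
      have := minpoly.eq_of_irreducible_of_monic hirr hx hmon
      exact ⟨by rw [← this, Set.toFinset_card, h1], this.symm⟩
    · rintro ⟨_, hx⟩
      rw [← hx]; exact minpoly.aeval F x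
  · intro x hx
    simp only [Finset.coe_filter, Finset.mem_univ, true_and, Set.mem_ofPred_eq] at hx ⊢
    rw [mem_irrSet]
    have hi := Algebra.IsIntegral.isIntegral (R := F) x
    exact ⟨⟨minpoly.monic hi, minpoly.irreducible hi, hx.le⟩, hx⟩

open Polynomial in
lemma gauss_nat (F : Type) [Field F] [Fintype F] (n : ℕ) (hn : n ≠ 0) :
    ∑ d ∈ n.divisors, d * irrCnt F d = Fintype.card F ^ n := by
  obtain ⟨p, hp⟩ := CharP.exists F
  have : Fact (Nat.Prime p) := ⟨CharP.char_is_prime F p⟩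
  have : NeZero n := ⟨hn⟩
  exact gauss_aux F n hn (FiniteField.Extension F p n) (FiniteField.natCard_extension F p n)
    (FiniteField.finrank_extension F p n) inferInstance

/-- weighted count -/
noncomputable def PW (F : Type) [Field F] [Fintype F] (d : ℕ) : ℝ := (d : ℝ) * irrCnt F d

lemma PW_nonneg (F : Type) [Field F] [Fintype F] (d : ℕ) : 0 ≤ PW F d := by
  unfold PW; positivity

lemma PW_gauss (F : Type) [Field F] [Fintype F] (n : ℕ) (hn : n ≠ 0) :
    ∑ d ∈ n.divisors, PW F d = (Fintype.card F : ℝ) ^ n := by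
  unfold PW
  exact_mod_cast gauss_nat F n hn

lemma log_FqFun (F : Type) [Field F] [Fintype F] (m : ℕ) (z : ℝ) (hz : 0 < z)
    (hzq : z < (Fintype.card F : ℝ)) :
    z * deriv (FqFun F m) z / FqFun F m z =
      ∑ d ∈ Finset.Icc 1 m, PW F d *
        ((z / (Fintype.card F : ℝ)) ^ d / (1 - (z / (Fintype.card F : ℝ)) ^ d)) := by
  set q : ℝ := (Fintype.card F : ℝ) with hq
  have hq0 : 0 < q := hz.trans hzq
  have hF : FqFun F m = fun z => ∏ p ∈ irrSet F m, (1 - (z / q) ^ p.natDegree)⁻¹ := by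
    funext y
    exact finprod_mem_eq_finite_toFinset_prod _ (irr_finite F m)
  have hw1 : z / q < 1 := (div_lt_one hq0).2 hzq
  have hw0 : 0 < z / q := by positivity
  have hpos : ∀ d : ℕ, d ≠ 0 → 0 < 1 - (z / q) ^ d := fun d hd =>
    sub_pos.2 (pow_lt_one₀ hw0.le hw1 hd)
  have hpd : ∀ p ∈ irrSet F m, p.natDegree ≠ 0 := fun p hp =>
    ((mem_irrSet F m p).1 hp).2.1.natDegree_pos.ne'
  have hder : ∀ d : ℕ, d ≠ 0 → HasDerivAt (fun z : ℝ => (1 - (z / q) ^ d)⁻¹)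
      (-(-(d * (z / q) ^ (d - 1) * (1 / q))) / (1 - (z / q) ^ d) ^ 2) z := by
    intro d hd
    have h1 : HasDerivAt (fun z : ℝ => 1 - (z / q) ^ d) (-(d * (z / q) ^ (d - 1) * (1 / q))) z :=
      (((hasDerivAt_id z).div_const q).pow d).const_sub 1
    exact h1.inv (hpos d hd).ne'
  rw [mul_div_assoc, ← logDeriv_apply, hF, logDeriv_prod, Finset.mul_sum]
  · rw [← Finset.sum_congr rfl (fun d _ => show (irrCnt F d : ℝ) * ((d : ℝ) *
        ((z / q) ^ d / (1 - (z / q) ^ d))) = _ by unfold PW; ring)]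
    rw [← irr_sum F m (fun d => (d : ℝ) * ((z / q) ^ d / (1 - (z / q) ^ d)))]
    refine Finset.sum_congr rfl fun p hp => ?_
    have hd := hpd p hp
    rw [logDeriv_apply, (hder _ hd).deriv]
    have h2 := (hpos _ hd).ne'
    obtain ⟨k, hk⟩ := Nat.exists_eq_succ_of_ne_zero hd
    rw [hk] at h2 ⊢
    simp only [Nat.succ_eq_add_one, Nat.add_sub_cancel] at h2 ⊢
    generalize hw : z / q = w at *
    have hz' : z = w * q := by rw [← hw]; field_simp
    rw [hz']
    field_simp
    ring
  · intro p hp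
    exact inv_ne_zero (hpos _ (hpd p hp)).ne'
  · intro p hp
    exact (hder _ (hpd p hp)).differentiableAt

lemma geomsum_le (r0 r : ℝ) (h0 : 1 < r0) (h : r0 ≤ r) (m : ℕ) :
    ∑ d ∈ Finset.Icc 1 m, r ^ d ≤ r0 / (r0 - 1) * r ^ m := by
  have hK : r ≤ r0 / (r0 - 1) * (r - 1) := by
    rw [div_mul_eq_mul_div, le_div_iff₀ (by linarith)]
    nlinarith
  induction m with
  | zero => simp; exact div_nonneg (by linarith) (by linarith)
  | succ m ih =>
    rw [Finset.sum_Icc_succ_top (by omega)]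
    have hr : 0 < r ^ m := pow_pos (by linarith) m
    rw [pow_succ]
    nlinarith

lemma term_decomp (w : ℝ) (h0 : 0 < w) (h1 : w < 1) (d : ℕ) (hd : d ≠ 0) (K : ℕ) :
    w ^ d / (1 - w ^ d) = ∑ k ∈ Finset.Icc 1 K, w ^ (d * k) + w ^ (d * (K + 1)) / (1 - w ^ d) := by
  have hp : 1 - w ^ d ≠ 0 := (sub_pos.2 (pow_lt_one₀ h0.le h1 hd)).ne'
  induction K with
  | zero => simp
  | succ K ih =>
    rw [ih, Finset.sum_Icc_succ_top (by omega), add_assoc]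
    congr 1
    field_simp
    ring

/-- remainder -/
noncomputable def Rem (P : ℕ → ℝ) (m : ℕ) (w : ℝ) : ℝ :=
  ∑ d ∈ Finset.Icc 1 m, P d * (w ^ (d * (m / d + 1)) / (1 - w ^ d))

lemma core_decomp (q : ℝ) (P : ℕ → ℝ) (hg : ∀ n : ℕ, n ≠ 0 → ∑ d ∈ n.divisors, P d = q ^ n)
    (m : ℕ) (w : ℝ) (h0 : 0 < w) (h1 : w < 1) :
    ∑ d ∈ Finset.Icc 1 m, P d * (w ^ d / (1 - w ^ d)) =
      ∑ j ∈ Finset.Icc 1 m, (q * w) ^ j + Rem P m w := by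
  unfold Rem
  have e1 : ∀ d ∈ Finset.Icc 1 m, P d * (w ^ d / (1 - w ^ d)) =
      ∑ k ∈ Finset.Icc 1 (m / d), P d * w ^ (d * k)
        + P d * (w ^ (d * (m / d + 1)) / (1 - w ^ d)) := by
    intro d hd
    have hd' : d ≠ 0 := by have := (Finset.mem_Icc.1 hd).1; omega
    rw [term_decomp w h0 h1 d hd' (m / d), mul_add, Finset.mul_sum]
  rw [Finset.sum_congr rfl e1, Finset.sum_add_distrib]
  congr 1
  have e2 : ∀ j ∈ Finset.Icc 1 m, (q * w) ^ j = ∑ d ∈ j.divisors, P d * w ^ j := by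
    intro j hj
    have hj' : j ≠ 0 := by have := (Finset.mem_Icc.1 hj).1; omega
    rw [← Finset.sum_mul, hg j hj', mul_pow]
  rw [Finset.sum_congr rfl e2, Finset.sum_sigma', Finset.sum_sigma']
  refine Finset.sum_bij' (fun a _ => ⟨a.1 * a.2, a.1⟩) (fun a _ => ⟨a.2, a.1 / a.2⟩) ?_ ?_ ?_ ?_ ?_
  · rintro ⟨d, k⟩ h
    simp only [Finset.mem_sigma, Finset.mem_Icc, Nat.mem_divisors] at h ⊢
    obtain ⟨⟨a, b⟩, c, e⟩ := h
    have := (Nat.le_div_iff_mul_le (by omega)).1 e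
    have h3 : 1 ≤ d * k := Nat.mul_pos a c
    refine ⟨⟨h3, by linarith [mul_comm d k]⟩, dvd_mul_right _ _, by omega⟩
  · rintro ⟨j, d⟩ h
    simp only [Finset.mem_sigma, Finset.mem_Icc, Nat.mem_divisors] at h ⊢
    obtain ⟨⟨a, b⟩, c, e⟩ := h
    have hd := Nat.pos_of_dvd_of_pos c (by omega)
    have hle := Nat.le_of_dvd (by omega) c
    exact ⟨⟨hd, hle.trans b⟩, Nat.div_pos hle hd, Nat.div_le_div_right b⟩
  · rintro ⟨d, k⟩ h
    simp only [Finset.mem_sigma, Finset.mem_Icc] at h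
    simp [Nat.mul_div_cancel_left k (show 0 < d by omega)]
  · rintro ⟨j, d⟩ h
    simp only [Finset.mem_sigma, Finset.mem_Icc, Nat.mem_divisors] at h
    simp [Nat.mul_div_cancel' h.2.1]
  · rintro ⟨d, k⟩ h
    rfl

lemma Rem_nonneg (P : ℕ → ℝ) (hP : ∀ d, 0 ≤ P d) (m : ℕ) (w : ℝ) (h0 : 0 < w) (h1 : w < 1) :
    0 ≤ Rem P m w := by
  refine Finset.sum_nonneg fun d hd => mul_nonneg (hP d) (div_nonneg (by positivity) ?_)
  exact sub_nonneg.2 (pow_le_one₀ h0.le h1.le)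

lemma P_le (q : ℝ) (P : ℕ → ℝ) (hP : ∀ d, 0 ≤ P d)
    (hg : ∀ n : ℕ, n ≠ 0 → ∑ d ∈ n.divisors, P d = q ^ n) (d : ℕ) (hd : d ≠ 0) : P d ≤ q ^ d := by
  rw [← hg d hd]
  exact Finset.single_le_sum (fun i _ => hP i) (Nat.mem_divisors_self d hd)

lemma P_ge (q : ℝ) (hq : 2 ≤ q) (P : ℕ → ℝ) (hP : ∀ d, 0 ≤ P d)
    (hg : ∀ n : ℕ, n ≠ 0 → ∑ d ∈ n.divisors, P d = q ^ n) (m : ℕ) (hm : 3 ≤ m) :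
    q ^ m / 2 ≤ P m := by
  have h := hg m (by omega)
  rw [← Nat.insert_self_properDivisors (by omega : m ≠ 0),
    Finset.sum_insert Nat.self_notMem_properDivisors] at h
  have h1 : ∑ d ∈ m.properDivisors, P d ≤ ∑ d ∈ Finset.Icc 1 (m / 2), q ^ d := by
    calc ∑ d ∈ m.properDivisors, P d ≤ ∑ d ∈ Finset.Icc 1 (m / 2), P d := by
          refine Finset.sum_le_sum_of_subset_of_nonneg ?_ (fun i _ _ => hP i)
          intro d hd
          obtain ⟨⟨k, hk⟩, hlt⟩ := Nat.mem_properDivisors.1 hd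
          have hd0 : 0 < d := Nat.pos_of_ne_zero (by rintro rfl; omega)
          have hk2 : 2 ≤ k := by
            by_contra hcon
            have : k ≤ 1 := by omega
            have : d * k ≤ d * 1 := Nat.mul_le_mul_left d this
            omega
          have : d * 2 ≤ m := hk ▸ Nat.mul_le_mul_left d hk2
          exact Finset.mem_Icc.2 ⟨hd0, by omega⟩
      _ ≤ _ := Finset.sum_le_sum fun d hd =>
          P_le q P hP hg d (by have := (Finset.mem_Icc.1 hd).1; omega)
  have h2 := geomsum_le 2 q (by norm_num) hq (m / 2)
  have h3 : q ^ m = q ^ (m / 2) * q ^ (m - m / 2) := by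
    rw [← pow_add]; congr 1; omega
  have h4 : (4 : ℝ) ≤ q ^ (m - m / 2) := by
    calc (4 : ℝ) = 2 ^ 2 := by norm_num
      _ ≤ q ^ 2 := by gcongr
      _ ≤ _ := pow_le_pow_right₀ (by linarith) (by omega)
  have h5 : 0 < q ^ (m / 2) := by positivity
  have h6 : 4 * q ^ (m / 2) ≤ q ^ m := by rw [h3]; nlinarith
  norm_num at h2
  linarith

lemma Rem_le (q : ℝ) (hq : 2 ≤ q) (P : ℕ → ℝ) (hP : ∀ d, 0 ≤ P d)
    (hg : ∀ n : ℕ, n ≠ 0 → ∑ d ∈ n.divisors, P d = q ^ n) (m : ℕ) (w : ℝ)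
    (h0 : 0 < w) (h1 : w < 1) :
    Rem P m w ≤ (∑ d ∈ Finset.Icc 1 m, (q * w ^ 2) ^ d) / (1 - w) := by
  unfold Rem
  rw [Finset.sum_div]
  refine Finset.sum_le_sum fun d hd => ?_
  obtain ⟨ha, hb⟩ := Finset.mem_Icc.1 hd
  rw [mul_pow, mul_div_assoc]
  have hmd : 1 ≤ m / d := Nat.div_pos hb ha
  have e1 : w ^ (d * (m / d + 1)) ≤ (w ^ 2) ^ d := by
    rw [← pow_mul]
    exact pow_le_pow_of_le_one h0.le h1.le (by nlinarith)
  have e2 : w ^ d ≤ w := by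
    calc w ^ d ≤ w ^ 1 := pow_le_pow_of_le_one h0.le h1.le ha
      _ = w := pow_one w
  have e3 := P_le q P hP hg d (by omega)
  have e4 : 0 < 1 - w := by linarith
  have e5 : 0 < 1 - w ^ d := by linarith
  gcongr

lemma Rem_ge (q : ℝ) (hq : 2 ≤ q) (P : ℕ → ℝ) (hP : ∀ d, 0 ≤ P d)
    (hg : ∀ n : ℕ, n ≠ 0 → ∑ d ∈ n.divisors, P d = q ^ n) (m : ℕ) (hm : 3 ≤ m) (w : ℝ)
    (h0 : 0 < w) (h1 : w < 1) :
    (q * w) ^ m * (q * w) ^ m / (2 * q ^ m) ≤ Rem P m w := by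
  have hw : ∀ d ∈ Finset.Icc 1 m, 0 ≤ P d * (w ^ (d * (m / d + 1)) / (1 - w ^ d)) := by
    intro d hd
    refine mul_nonneg (hP d) (div_nonneg (by positivity) ?_)
    exact sub_nonneg.2 (pow_le_one₀ h0.le h1.le)
  have h := Finset.single_le_sum hw (Finset.mem_Icc.2 ⟨by omega, le_refl m⟩)
  refine le_trans ?_ h
  rw [Nat.div_self (by omega)]
  have hp := P_ge q hq P hP hg m hm
  have e5 : 0 < 1 - w ^ m := sub_pos.2 (pow_lt_one₀ h0.le h1 (by omega))
  have e6 : w ^ (m * (1 + 1)) ≤ w ^ (m * (1 + 1)) / (1 - w ^ m) := by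
    rw [le_div_iff₀ e5]
    have : 0 < w ^ m := by positivity
    have : 0 < w ^ (m * (1 + 1)) := by positivity
    nlinarith
  calc (q * w) ^ m * (q * w) ^ m / (2 * q ^ m) = q ^ m / 2 * w ^ (m * (1 + 1)) := by
        have : q ^ m ≠ 0 := by positivity
        rw [mul_pow]
        field_simp
        ring
    _ ≤ _ := by gcongr; exact hP m

lemma S_mono (m : ℕ) (hm : 1 ≤ m) (x z : ℝ) (hx : 0 < x)
    (h : ∑ j ∈ Finset.Icc 1 m, z ^ j ≤ ∑ j ∈ Finset.Icc 1 m, x ^ j) : z ≤ x := by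
  by_contra hc
  push Not at hc
  have : ∑ j ∈ Finset.Icc 1 m, x ^ j < ∑ j ∈ Finset.Icc 1 m, z ^ j := by
    refine Finset.sum_lt_sum_of_nonempty ⟨1, by simp [hm]⟩ fun j hj => ?_
    exact pow_lt_pow_left₀ hc hx.le (by have := (Finset.mem_Icc.1 hj).1; omega)
  linarith

lemma pow_diff_le (x z : ℝ) (hz : 0 ≤ z) (h : z ≤ x) (i : ℕ) :
    x ^ (i + 1) - z ^ (i + 1) ≤ (x - z) * ((i + 1 : ℕ) * x ^ i) := by
  induction i with
  | zero => simp
  | succ i ih =>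
    have h1 : z ^ (i + 1) ≤ x ^ (i + 1) := pow_le_pow_left₀ hz h _
    have h2 : 0 ≤ x := hz.trans h
    have h3 := mul_le_mul_of_nonneg_left ih h2
    have h4 : (x - z) * z ^ (i + 1) ≤ (x - z) * x ^ (i + 1) := by
      gcongr
    push_cast at h3 ⊢
    calc x ^ (i + 1 + 1) - z ^ (i + 1 + 1)
        = x * (x ^ (i + 1) - z ^ (i + 1)) + (x - z) * z ^ (i + 1) := by ring
      _ ≤ x * ((x - z) * ((i + 1) * x ^ i)) + (x - z) * x ^ (i + 1) := add_le_add h3 h4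
      _ = _ := by ring

lemma pow_diff_ge (x z : ℝ) (hz : 0 ≤ z) (h : z ≤ x) (i : ℕ) :
    (x - z) * ((i + 1 : ℕ) * z ^ i) ≤ x ^ (i + 1) - z ^ (i + 1) := by
  induction i with
  | zero => simp
  | succ i ih =>
    have h1 : z ^ (i + 1) ≤ x ^ (i + 1) := pow_le_pow_left₀ hz h _
    have h3 := mul_le_mul_of_nonneg_left ih hz
    have h4 : (x - z) * z ^ (i + 1) ≤ (x - z) * x ^ (i + 1) := by
      gcongr
    push_cast at h3 ⊢
    calc _ = z * ((x - z) * ((i + 1) * z ^ i)) + (x - z) * z ^ (i + 1) := by ring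
      _ ≤ z * (x ^ (i + 1) - z ^ (i + 1)) + (x - z) * x ^ (i + 1) := add_le_add h3 h4
      _ = _ := by ring

lemma S_diff_le (m : ℕ) (x z : ℝ) (hz : 0 ≤ z) (h : z ≤ x) (hx : 1 ≤ x) :
    ∑ j ∈ Finset.Icc 1 m, x ^ j - ∑ j ∈ Finset.Icc 1 m, z ^ j ≤
      (x - z) * (m * ∑ j ∈ Finset.Icc 1 m, x ^ j) := by
  rw [← Finset.sum_sub_distrib, Finset.mul_sum, Finset.mul_sum]
  refine Finset.sum_le_sum fun j hj => ?_
  obtain ⟨a, b⟩ := Finset.mem_Icc.1 hj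
  obtain ⟨i, rfl⟩ : ∃ i, j = i + 1 := ⟨j - 1, by omega⟩
  refine (pow_diff_le x z hz h i).trans ?_
  have h1 : x ^ i ≤ x ^ (i + 1) := pow_le_pow_right₀ hx (by omega)
  have h2 : ((i + 1 : ℕ) : ℝ) ≤ m := by exact_mod_cast b
  have h3 : 0 ≤ x - z := by linarith
  gcongr

lemma S_diff_ge (m : ℕ) (hm : 1 ≤ m) (x z : ℝ) (hz : 0 ≤ z) (h : z ≤ x) :
    (x - z) * (m * z ^ (m - 1)) ≤
    ∑ j ∈ Finset.Icc 1 m, x ^ j - ∑ j ∈ Finset.Icc 1 m, z ^ j := by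
  rw [← Finset.sum_sub_distrib]
  obtain ⟨i, rfl⟩ : ∃ i, m = i + 1 := ⟨m - 1, by omega⟩
  refine (pow_diff_ge x z hz h i).trans ?_
  refine Finset.single_le_sum (f := fun j => x ^ j - z ^ j) (fun j _ => ?_)
    (Finset.mem_Icc.2 ⟨hm, le_refl _⟩)
  exact sub_nonneg.2 (pow_le_pow_left₀ hz h j)

lemma core_bound (q y : ℝ) (hq : 2 ≤ q) (P : ℕ → ℝ) (hP : ∀ d, 0 ≤ P d)
    (hg : ∀ n : ℕ, n ≠ 0 → ∑ d ∈ n.divisors, P d = q ^ n)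
    (hy1 : 1 < y) (hyq : y < q) (hyy : q < y ^ 2) (m : ℕ) (hm : 3 ≤ m) (n : ℝ) (hn : 0 < n)
    (hbig : m * (1 + 1 / (1 - y / q)) * y ^ m < n)
    (x : ℝ) (hx : 0 < x) (hxn : ∑ j ∈ Finset.Icc 1 m, x ^ j = n)
    (z : ℝ) (hz : 0 < z) (hzq : z < q)
    (hzn : ∑ j ∈ Finset.Icc 1 m, z ^ j + Rem P m (z / q) = n) :
    min (1 / 2) (1 / 2 * (1 / (2 * (y / (y - 1)))) ^ 2) * (min n (q ^ m)) ^ 2 / (q ^ m * n * m)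
        ≤ x - z ∧
      x - z ≤ ((y ^ 2 / q) / (y ^ 2 / q - 1) * q) * min n (q ^ m) / (q ^ m * m * (1 - z / q)) := by
  have hq0 : 0 < q := by linarith
  have hw0 : 0 < z / q := by positivity
  have hw1 : z / q < 1 := (div_lt_one hq0).2 hzq
  have hR0 := Rem_nonneg P hP m (z / q) hw0 hw1
  have hRle := Rem_le q hq P hP hg m (z / q) hw0 hw1
  have hRge := Rem_ge q hq P hP hg m hm (z / q) hw0 hw1
  have hqw : q * (z / q) = z := by field_simp
  have hqw2 : q * (z / q) ^ 2 = z ^ 2 / q := by field_simp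
  rw [hqw] at hRge
  rw [hqw2] at hRle
  set R := Rem P m (z / q) with hR
  have hzx : z ≤ x := S_mono m (by omega) x z hx (by rw [hxn]; linarith)
  have hm0 : (0 : ℝ) < m := by exact_mod_cast (by omega : 0 < m)
  have hyw : 0 < 1 - y / q := sub_pos.2 ((div_lt_one hq0).2 hyq)
  have hzy : y ≤ z := by
    by_contra hc
    push Not at hc
    have a1 : ∑ j ∈ Finset.Icc 1 m, z ^ j ≤ m * y ^ m := by
      calc ∑ j ∈ Finset.Icc 1 m, z ^ j ≤ ∑ j ∈ Finset.Icc 1 m, y ^ m := by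
            refine Finset.sum_le_sum fun j hj => ?_
            exact (pow_le_pow_left₀ hz.le hc.le j).trans
              (pow_le_pow_right₀ hy1.le (Finset.mem_Icc.1 hj).2)
        _ = _ := by simp
    have a2 : ∑ j ∈ Finset.Icc 1 m, (z ^ 2 / q) ^ j ≤ m * y ^ m := by
      calc ∑ j ∈ Finset.Icc 1 m, (z ^ 2 / q) ^ j ≤ ∑ j ∈ Finset.Icc 1 m, y ^ m := by
            refine Finset.sum_le_sum fun j hj => ?_
            have : z ^ 2 / q ≤ y := by
              rw [div_le_iff₀ hq0]; nlinarith
            exact (pow_le_pow_left₀ (by positivity) this j).trans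
              (pow_le_pow_right₀ hy1.le (Finset.mem_Icc.1 hj).2)
        _ = _ := by simp
    have a3 : R ≤ m * y ^ m / (1 - y / q) := by
      refine hRle.trans ?_
      have : z / q ≤ y / q := by gcongr
      gcongr
    have a4 : (m : ℝ) * (1 + 1 / (1 - y / q)) * y ^ m = m * y ^ m + m * y ^ m / (1 - y / q) := by
      field_simp
    linarith
  have hx1 : 1 ≤ x := by linarith
  have hD1 := S_diff_le m x z hz.le hzx hx1
  have hD2 := S_diff_ge m (by omega) x z hz.le hzx
  have hSR : ∑ j ∈ Finset.Icc 1 m, x ^ j - ∑ j ∈ Finset.Icc 1 m, z ^ j = R := by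
    rw [hxn]; linarith
  rw [hSR] at hD1 hD2
  rw [hxn] at hD1
  have hqm : 0 < q ^ m := by positivity
  have hmin0 : 0 < min n (q ^ m) := lt_min hn hqm
  set mu := min n (q ^ m) with hmu
  have hmun : mu ≤ n := min_le_left _ _
  have hmuq : mu ≤ q ^ m := min_le_right _ _
  constructor
  · set kap := y / (y - 1) with hkap
    have hkap0 : 0 < kap := div_pos (by linarith) (by linarith)
    set c := min (1 / 2 : ℝ) (1 / 2 * (1 / (2 * kap)) ^ 2) with hc
    have hc1 : c ≤ 1 / 2 := min_le_left _ _
    have hc2 : c ≤ 1 / 2 * (1 / (2 * kap)) ^ 2 := min_le_right _ _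
    have hkey : c * mu ^ 2 ≤ q ^ m * R := by
      rcases le_or_gt (n / 2) R with hcase | hcase
      · calc c * mu ^ 2 ≤ 1 / 2 * mu ^ 2 := by gcongr
          _ = mu * (mu / 2) := by ring
          _ ≤ q ^ m * (n / 2) := by gcongr
          _ ≤ _ := by gcongr
      · have hS := geomsum_le y z hy1 hzy m
        rw [← hkap] at hS
        have b1 : n / 2 ≤ kap * z ^ m := by linarith
        have b2 : 1 / (2 * kap) * n ≤ z ^ m := by
          rw [div_mul_eq_mul_div, div_le_iff₀ (by positivity)]; linarith
        have b3 : z ^ m * z ^ m / 2 ≤ q ^ m * R := by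
          have := mul_le_mul_of_nonneg_left hRge hqm.le
          refine le_trans (le_of_eq ?_) this
          field_simp
        calc c * mu ^ 2 ≤ 1 / 2 * (1 / (2 * kap)) ^ 2 * n ^ 2 := by gcongr
          _ = (1 / (2 * kap) * n) * (1 / (2 * kap) * n) / 2 := by ring
          _ ≤ z ^ m * z ^ m / 2 := by gcongr
          _ ≤ _ := b3
    rw [div_le_iff₀ (by positivity)]
    calc c * mu ^ 2 ≤ q ^ m * R := hkey
      _ ≤ q ^ m * ((x - z) * (m * n)) := by gcongr
      _ = _ := by ring
  · have hr0 : 1 < y ^ 2 / q := by rw [lt_div_iff₀ hq0]; linarith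
    have hrz : y ^ 2 / q ≤ z ^ 2 / q := by gcongr
    have hG := geomsum_le _ _ hr0 hrz m
    set K := (y ^ 2 / q) / (y ^ 2 / q - 1) with hK
    have hK0 : 0 < K := div_pos (by linarith) (by linarith)
    have hw : 0 < 1 - z / q := by linarith
    have hzmu : z ^ m ≤ mu := by
      refine le_min ?_ (pow_le_pow_left₀ hz.le hzq.le m)
      rw [← hxn]
      calc z ^ m ≤ x ^ m := pow_le_pow_left₀ hz.le hzx m
        _ ≤ _ := Finset.single_le_sum (f := fun j => x ^ j) (fun j _ => by positivity)
          (Finset.mem_Icc.2 ⟨by omega, le_refl _⟩)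
    have d1 : R * (1 - z / q) ≤ K * (z ^ 2 / q) ^ m := by
      rw [le_div_iff₀ hw] at hRle
      linarith
    rw [le_div_iff₀ (by positivity)]
    have hzp : 0 < z ^ (m - 1) := by positivity
    refine le_of_mul_le_mul_right ?_ hzp
    have hzz : z ^ m = z ^ (m - 1) * z := by rw [← pow_succ]; congr 1; omega
    calc (x - z) * (q ^ m * m * (1 - z / q)) * z ^ (m - 1)
        = q ^ m * (((x - z) * (m * z ^ (m - 1))) * (1 - z / q)) := by ring
      _ ≤ q ^ m * (R * (1 - z / q)) := by gcongr
      _ ≤ q ^ m * (K * (z ^ 2 / q) ^ m) := by gcongr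
      _ = K * z ^ m * z ^ m := by rw [div_pow]; field_simp; ring
      _ = K * z * z ^ m * z ^ (m - 1) := by nth_rewrite 1 [hzz]; ring
      _ ≤ K * q * mu * z ^ (m - 1) := by gcongr

lemma exists_M (y Y A : ℝ) (hy : 0 < y) (hyY : y < Y) (hA : 0 < A) :
    ∃ M : ℕ, 3 ≤ M ∧ ∀ m : ℕ, M ≤ m → m * A * y ^ m < Y ^ m := by
  have hY : 0 < Y := hy.trans hyY
  have h := tendsto_self_mul_const_pow_of_lt_one (r := y / Y) (by positivity)
    ((div_lt_one hY).2 hyY)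
  have h2 := h.eventually (gt_mem_nhds (show (0 : ℝ) < 1 / A by positivity))
  obtain ⟨M, hM⟩ := Filter.eventually_atTop.1 h2
  refine ⟨max M 3, le_max_right _ _, fun m hm => ?_⟩
  have h3 := hM m (le_trans (le_max_left _ _) hm)
  rw [lt_div_iff₀ hA, div_pow, mul_div_assoc', div_mul_eq_mul_div, div_lt_one (by positivity)] at h3
  linarith [h3, mul_right_comm (m : ℝ) A (y ^ m)]

/-- (i) For every prime power `q` (cardinality of a finite field `F`) and
all integers `n ≥ m ≥ 1`, one has `x_q ≤ x`. (ii) Fix such `q` and `ε ∈ (0,1/2)`.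
There exist `c, C > 0` and `N` such that for all `n ≥ N` and
`(3/4)·log_q n ≤ m ≤ (2−ε)·log_q n`, one has
`c·(min{n,q^m})²/(q^m·n·m) ≤ x − x_q ≤ C·min{n,q^m}/(q^m·m·(1 − x_q/q))`. -/
theorem stmt17 :
    (∀ (F : Type) [Field F] [Fintype F], ∀ n m : ℕ, 1 ≤ m → m ≤ n →
      ∀ x : ℝ, 0 < x → (∑ i ∈ Finset.Icc 1 m, x ^ i) = (n : ℝ) →
      ∀ xq : ℝ, 0 < xq → xq < (Fintype.card F : ℝ) →
      xq * deriv (FqFun F m) xq / FqFun F m xq = (n : ℝ) → xq ≤ x) ∧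
    (∀ (F : Type) [Field F] [Fintype F], ∀ ε : ℝ, 0 < ε → ε < 1 / 2 →
      ∃ c C : ℝ, 0 < c ∧ 0 < C ∧ ∃ N : ℕ, ∀ n : ℕ, N ≤ n → ∀ m : ℕ,
      (3 / 4) * Real.log n / Real.log (Fintype.card F) ≤ (m : ℝ) →
      (m : ℝ) ≤ (2 - ε) * Real.log n / Real.log (Fintype.card F) →
      ∀ x : ℝ, 0 < x → (∑ i ∈ Finset.Icc 1 m, x ^ i) = (n : ℝ) →
      ∀ xq : ℝ, 0 < xq → xq < (Fintype.card F : ℝ) →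
      xq * deriv (FqFun F m) xq / FqFun F m xq = (n : ℝ) →
      c * (min (n : ℝ) ((Fintype.card F : ℝ) ^ m)) ^ 2 /
          ((Fintype.card F : ℝ) ^ m * (n : ℝ) * (m : ℝ)) ≤ x - xq ∧
        x - xq ≤ C * min (n : ℝ) ((Fintype.card F : ℝ) ^ m) /
          ((Fintype.card F : ℝ) ^ m * (m : ℝ) * (1 - xq / (Fintype.card F : ℝ)))) := by
  constructor
  · intro F _ _ n m hm hmn x hx hxn xq hxq hxqq heq
    rw [log_FqFun F m xq hxq hxqq] at heq
    have hq0 : (0 : ℝ) < Fintype.card F := hxq.trans hxqq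
    have hw0 : 0 < xq / (Fintype.card F : ℝ) := by positivity
    have hw1 : xq / (Fintype.card F : ℝ) < 1 := (div_lt_one hq0).2 hxqq
    rw [core_decomp _ (PW F) (PW_gauss F) m _ hw0 hw1, mul_div_cancel₀ _ hq0.ne'] at heq
    have := Rem_nonneg (PW F) (PW_nonneg F) m _ hw0 hw1
    exact S_mono m hm x xq hx (by linarith)
  · intro F _ _ ε hε hε2
    have hq : (2 : ℝ) ≤ Fintype.card F := by exact_mod_cast Fintype.one_lt_card (α := F)
    have hg := PW_gauss F
    have hlog : ∀ m : ℕ, ∀ z : ℝ, 0 < z → z < (Fintype.card F : ℝ) →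
        z * deriv (FqFun F m) z / FqFun F m z =
          ∑ j ∈ Finset.Icc 1 m, z ^ j + Rem (PW F) m (z / (Fintype.card F : ℝ)) := by
      intro m z hz hzq
      have hq0 : (0 : ℝ) < Fintype.card F := hz.trans hzq
      rw [log_FqFun F m z hz hzq, core_decomp _ (PW F) hg m _ (by positivity)
        ((div_lt_one hq0).2 hzq), mul_div_cancel₀ _ hq0.ne']
    generalize (Fintype.card F : ℝ) = q at *
    have hq0 : 0 < q := by linarith
    have hq1 : 1 < q := by linarith
    have hL : 0 < Real.log q := Real.log_pos hq1
    obtain ⟨y, hy⟩ : ∃ y, y = q ^ (1 / (2 - ε / 2) : ℝ) := ⟨_, rfl⟩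
    obtain ⟨Y, hY⟩ : ∃ Y, Y = q ^ (1 / (2 - ε) : ℝ) := ⟨_, rfl⟩
    have hy1 : 1 < y := by
      rw [hy]; exact Real.one_lt_rpow hq1 (by apply div_pos <;> linarith)
    have hyY : y < Y := by
      rw [hy, hY]
      apply Real.rpow_lt_rpow_of_exponent_lt hq1
      apply one_div_lt_one_div_of_lt <;> linarith
    have hyq : y < q := by
      nth_rewrite 1 [← Real.rpow_one q]
      rw [hy]
      apply Real.rpow_lt_rpow_of_exponent_lt hq1
      rw [div_lt_one] <;> linarith
    have hyy : q < y ^ 2 := by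
      nth_rewrite 1 [← Real.rpow_one q]
      rw [hy, ← Real.rpow_natCast, ← Real.rpow_mul hq0.le]
      apply Real.rpow_lt_rpow_of_exponent_lt hq1
      rw [div_mul_eq_mul_div, lt_div_iff₀ (by linarith)]
      push_cast
      linarith
    have hyw : 0 < 1 - y / q := sub_pos.2 ((div_lt_one hq0).2 hyq)
    obtain ⟨M, hM3, hM⟩ := exists_M y Y (1 + 1 / (1 - y / q)) (by linarith) hyY (by positivity)
    have hr0 : 1 < y ^ 2 / q := by rw [lt_div_iff₀ hq0]; linarith
    have hkap0 : 0 < y / (y - 1) := div_pos (by linarith) (by linarith)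
    refine ⟨min (1 / 2) (1 / 2 * (1 / (2 * (y / (y - 1)))) ^ 2),
      (y ^ 2 / q) / (y ^ 2 / q - 1) * q, lt_min (by norm_num) (by positivity),
      mul_pos (div_pos (by linarith) (by linarith)) hq0,
      ⌈Real.exp (4 / 3 * M * Real.log q)⌉₊, ?_⟩
    intro n hn m hm1 hm2 x hx hxn xq hxq hxqq heq
    have hn1 : Real.exp (4 / 3 * M * Real.log q) ≤ n := Nat.ceil_le.1 hn
    have hn0 : (0 : ℝ) < n := (Real.exp_pos _).trans_le hn1
    have hln : 4 / 3 * M * Real.log q ≤ Real.log n := (Real.le_log_iff_exp_le hn0).2 hn1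
    have hMm : M ≤ m := by
      have : (M : ℝ) ≤ m := by
        refine le_trans ?_ hm1
        rw [le_div_iff₀ hL]
        linarith
      exact_mod_cast this
    have hYn : Y ^ m ≤ n := by
      rw [← Real.log_le_log_iff (by have := hy1.trans hyY; positivity) hn0, Real.log_pow, hY,
        Real.log_rpow hq0]
      rw [le_div_iff₀ hL] at hm2
      have h2 : 0 < 2 - ε := by linarith
      rw [div_mul_eq_mul_div, mul_div_assoc', div_le_iff₀ h2]
      linarith
    rw [hlog m xq hxq hxqq] at heq
    exact core_bound q y hq (PW F) (PW_nonneg F) hg hy1 hyq hyy m (hM3.trans hMm) n hn0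
      ((hM m hMm).trans_le hYn) x hx hxn xq hxq hxqq heq
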